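/- Main theorem: assume |A| ≠ |B| and let θ = ½·arctan(2·Im(B\bar{A})/(|B|² − |A|²)). Then the state φ₀ minimizes the uncertainty product for the rotated observables α and β: with ⟨α⟩ = a cos θ + η sin θ and ⟨β⟩ = −a sin θ + η cos θ, one has (∫_ℝ |cos θ · x·φ₀(x) − iħ sin θ · φ₀′(x) − ⟨α⟩φ₀(x)|² dx) · (∫_ℝ |−sin θ · x·φ₀(x) − iħ cos θ · φ₀′(x) − ⟨β⟩φ₀(x)|² dx) = ħ²/4, i.e. Δα·Δβ = ħ/2. -/

import Mathlib

open MeasureTheory Complex Real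

/-!
Since `-iħφ₀' = (i(B/A)(x - a) + η)φ₀`, the observable `u x + v p` centred at `a u + η v` acts on
the packet as multiplication by `(u + i(B/A)v)(x - a)`. As `Re(B conj A) = 1`, `|φ₀|²` is the
density of a Gaussian of mean `a` and variance `ħ|A|²/2`, so the variance of the observable is
`(ħ/2)|A u + iB v|²`: up to `ħ/2`, a quadratic form in `(u, v)` with diagonal entries `|A|²`, `|B|²`
and off-diagonal entry `-Im(B conj A)`, whose determinant is `Re(B conj A)² = 1`. The product of the
two diagonal entries in a rotated frame is the determinant plus the square of the rotated
off-diagonal entry, and `θ` is an angle at which the latter vanishes.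
-/

section

open ProbabilityTheory ComplexConjugate

lemma rpow_neg_one_fourth_sq {t : ℝ} (ht : 0 ≤ t) : (t ^ (-(1/4 : ℝ))) ^ 2 = (√t)⁻¹ := by
  rw [← rpow_mul_natCast ht, sqrt_eq_rpow, ← rpow_neg ht]
  norm_num

lemma integral_sub_sq_mul_gaussianPDFReal (μ : ℝ) (v : NNReal) :
    ∫ x, (x - μ) ^ 2 * gaussianPDFReal μ v x = v := by
  rcases eq_or_ne v 0 with rfl | hv
  · simp
  calc ∫ x, (x - μ) ^ 2 * gaussianPDFReal μ v x
      = ∫ x, (x - μ) ^ 2 ∂gaussianReal μ v := by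
        simp only [integral_gaussianReal_eq_integral_smul hv, smul_eq_mul, mul_comm]
    _ = Var[fun x ↦ x; gaussianReal μ v] := by
        rw [variance_eq_integral aemeasurable_id', integral_id_gaussianReal]
    _ = v := variance_fun_id_gaussianReal

lemma mul_sin_arctan_div {d : ℝ} (hd : d ≠ 0) (k : ℝ) :
    d * Real.sin (Real.arctan (k / d)) = k * Real.cos (Real.arctan (k / d)) := by
  rw [← Real.tan_mul_cos (Real.cos_arctan_pos _).ne', Real.tan_arctan, ← mul_assoc,
    mul_div_cancel₀ k hd]

lemma rotated_diagonal_mul_rotated_diagonal (P Q m θ : ℝ) :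
    (P * Real.cos θ ^ 2 + Q * Real.sin θ ^ 2 - 2 * m * Real.cos θ * Real.sin θ) *
      (P * Real.sin θ ^ 2 + Q * Real.cos θ ^ 2 + 2 * m * Real.sin θ * Real.cos θ) =
    P * Q - m ^ 2 + (((Q - P) * Real.sin (2 * θ) - 2 * m * Real.cos (2 * θ)) / 2) ^ 2 := by
  rw [Real.sin_two_mul, Real.cos_two_mul']
  linear_combination (P * Q - m ^ 2) * (Real.sin θ ^ 2 + Real.cos θ ^ 2 + 1) *
    Real.sin_sq_add_cos_sq θ

lemma norm_mul_add_I_mul_mul_sq (A B : ℂ) (u v : ℝ) :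
    ‖A * u + I * B * v‖ ^ 2 =
      ‖A‖ ^ 2 * u ^ 2 + ‖B‖ ^ 2 * v ^ 2 - 2 * (B * conj A).im * u * v := by
  simp only [Complex.sq_norm, normSq_apply, add_re, add_im, mul_re, mul_im, ofReal_re, ofReal_im,
    I_re, I_im, conj_re, conj_im]
  ring

lemma norm_sq_mul_norm_sq_eq_re_sq_add_im_sq (A B : ℂ) :
    ‖A‖ ^ 2 * ‖B‖ ^ 2 = (B * conj A).re ^ 2 + (B * conj A).im ^ 2 := by
  rw [← mul_pow, mul_comm ‖A‖, ← norm_conj A, ← norm_mul, Complex.sq_norm, normSq_apply]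
  ring

lemma div_re_eq_mul_conj_re_div (A B : ℂ) : (B / A).re = (B * conj A).re / ‖A‖ ^ 2 := by
  rw [Complex.sq_norm, div_re, mul_re, conj_re, conj_im]
  ring

lemma mul_conj_re_eq_one_iff {A B : ℂ} :
    (B * conj A).re = 1 ↔ conj A * B + conj B * A = 2 := by
  have hconj : conj A * B + conj B * A = ((2 * (B * conj A).re : ℝ) : ℂ) := by
    rw [← add_conj]; simp [mul_comm]
  rw [hconj]
  norm_cast
  constructor <;> intro h <;> linarith

/-- The semiclassical wave packet `φ₀` with position parameter `a`, momentum parameter `η` and shape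
parameters `A`, `B`; the prefactor `c` stands for the chosen branch of `A^(-1/2)`. -/
noncomputable def wavePacket (ħ a η : ℝ) (A B c : ℂ) (x : ℝ) : ℂ :=
  (π ^ (-(1/4 : ℝ)) : ℝ) * (ħ ^ (-(1/4 : ℝ)) : ℝ) * c *
    Complex.exp (-B * ((x : ℂ) - a) ^ 2 / (2 * A * ħ) + I * η * ((x : ℂ) - a) / ħ)

/-- The mean square deviation `‖(u x + v p - e) ψ‖²` of the phase-space observable `u x + v p` from
the value `e` in the state `ψ`, where `p = -iħ d/dx`. It is the variance of the observable when `ψ`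
is normalized and `e` is its mean, and the junk value `0` when the integral diverges. -/
noncomputable def meanSqDeviation (ħ u v e : ℝ) (ψ : ℝ → ℂ) : ℝ :=
  ∫ x : ℝ, ‖(u : ℂ) * x * ψ x - I * ħ * v * deriv ψ x - e * ψ x‖ ^ 2

variable {ħ a η : ℝ} {A B c : ℂ}

lemma hasDerivAt_wavePacket (x : ℝ) :
    HasDerivAt (wavePacket ħ a η A B c)
      ((-(B / A) * (x - a) / ħ + I * η / ħ) * wavePacket ħ a η A B c x) x := by
  have hx : HasDerivAt (fun y : ℝ ↦ (y : ℂ) - a) 1 x :=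
    (hasDerivAt_id x).ofReal_comp.sub_const _
  have hexponent : HasDerivAt
      (fun y : ℝ ↦ -B * ((y : ℂ) - a) ^ 2 / (2 * A * ħ) + I * η * ((y : ℂ) - a) / ħ)
      (-(B / A) * (x - a) / ħ + I * η / ħ) x :=
    ((((hx.pow 2).const_mul (-B)).div_const (2 * A * ħ)).add
      ((hx.const_mul (I * η)).div_const (ħ : ℂ))).congr_deriv (by ring)
  refine (hexponent.cexp.const_mul ((π ^ (-(1/4 : ℝ)) : ℝ) * (ħ ^ (-(1/4 : ℝ)) : ℝ) * c : ℂ))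
    |>.congr_deriv ?_
  rw [wavePacket]
  ring

lemma centered_observable_wavePacket (hħ : ħ ≠ 0) (u v x : ℝ) :
    u * x * wavePacket ħ a η A B c x - I * ħ * v * deriv (wavePacket ħ a η A B c) x -
        (a * u + η * v : ℝ) * wavePacket ħ a η A B c x =
      (u + I * (B / A) * v) * ((x - a : ℝ) * wavePacket ħ a η A B c x) := by
  have hħ' : (ħ : ℂ) ≠ 0 := ofReal_ne_zero.2 hħ
  rw [(hasDerivAt_wavePacket x).deriv]
  generalize B / A = z
  push_cast
  field_simp
  linear_combination (-(η * v * wavePacket ħ a η A B c x)) * I_sq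

lemma norm_wavePacket_sq (hħ : 0 < ħ) (hAB : (B * conj A).re = 1) (hc : c ^ 2 = A⁻¹) (x : ℝ) :
    ‖wavePacket ħ a η A B c x‖ ^ 2 = gaussianPDFReal a (ħ / 2 * ‖A‖ ^ 2).toNNReal x := by
  have hA : 0 < ‖A‖ := norm_pos_iff.2 (by rintro rfl; simp at hAB)
  have hcoeff : ‖c‖ ^ 2 = ‖A‖⁻¹ := by rw [← norm_pow, hc, norm_inv]
  have hexponent : (-B * ((x : ℂ) - a) ^ 2 / (2 * A * ħ) + I * η * ((x : ℂ) - a) / ħ).re =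
      -(x - a) ^ 2 / (2 * ħ * ‖A‖ ^ 2) := by
    have hsplit : -B * ((x : ℂ) - a) ^ 2 / (2 * A * ħ) + I * η * ((x : ℂ) - a) / ħ =
        (-((x - a) ^ 2 / (2 * ħ)) : ℝ) * (B / A) + (η * (x - a) / ħ : ℝ) * I := by
      push_cast
      ring
    rw [hsplit, add_re, re_ofReal_mul, re_ofReal_mul, I_re, div_re_eq_mul_conj_re_div, hAB]
    ring
  have hsqrt : √(2 * π * (ħ / 2 * ‖A‖ ^ 2)) = √π * √ħ * ‖A‖ := by
    rw [show 2 * π * (ħ / 2 * ‖A‖ ^ 2) = π * ħ * ‖A‖ ^ 2 by ring, sqrt_mul (by positivity),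
      sqrt_mul pi_pos.le, sqrt_sq hA.le]
  simp only [wavePacket, gaussianPDFReal, norm_mul, mul_pow, norm_real, norm_eq_abs, sq_abs,
    rpow_neg_one_fourth_sq pi_pos.le, rpow_neg_one_fourth_sq hħ.le, hcoeff, norm_exp, hexponent,
    ← Real.exp_nat_mul, coe_toNNReal _ (by positivity : 0 ≤ ħ / 2 * ‖A‖ ^ 2), hsqrt, mul_inv]
  congr 2
  push_cast
  field_simp

lemma meanSqDeviation_wavePacket (hħ : 0 < ħ) (hAB : (B * conj A).re = 1) (hc : c ^ 2 = A⁻¹)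
    (u v : ℝ) :
    meanSqDeviation ħ u v (a * u + η * v) (wavePacket ħ a η A B c) =
      ħ / 2 * ‖A * u + I * B * v‖ ^ 2 := by
  have hA : A ≠ 0 := by rintro rfl; simp at hAB
  calc meanSqDeviation ħ u v (a * u + η * v) (wavePacket ħ a η A B c)
      = ∫ x, ‖u + I * (B / A) * v‖ ^ 2 *
          ((x - a) ^ 2 * gaussianPDFReal a (ħ / 2 * ‖A‖ ^ 2).toNNReal x) := by
        simp only [meanSqDeviation, centered_observable_wavePacket hħ.ne', norm_mul, mul_pow,
          norm_wavePacket_sq hħ hAB hc, norm_real, norm_eq_abs, sq_abs]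
    _ = ħ / 2 * (‖A‖ * ‖u + I * (B / A) * v‖) ^ 2 := by
        rw [integral_const_mul, integral_sub_sq_mul_gaussianPDFReal,
          coe_toNNReal _ (by positivity)]
        ring
    _ = ħ / 2 * ‖A * u + I * B * v‖ ^ 2 := by
        rw [← norm_mul]
        congr 3
        field_simp

lemma meanSqDeviation_mul_meanSqDeviation_rotated_wavePacket (hħ : 0 < ħ)
    (hAB : (B * conj A).re = 1) (hc : c ^ 2 = A⁻¹) (θ : ℝ) :
    meanSqDeviation ħ (Real.cos θ) (Real.sin θ) (a * Real.cos θ + η * Real.sin θ)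
        (wavePacket ħ a η A B c) *
      meanSqDeviation ħ (-Real.sin θ) (Real.cos θ) (a * -Real.sin θ + η * Real.cos θ)
        (wavePacket ħ a η A B c) =
    ħ ^ 2 / 4 * (1 + (((‖B‖ ^ 2 - ‖A‖ ^ 2) * Real.sin (2 * θ) -
      2 * (B * conj A).im * Real.cos (2 * θ)) / 2) ^ 2) := by
  have hdet : ‖A‖ ^ 2 * ‖B‖ ^ 2 - (B * conj A).im ^ 2 = 1 := by
    rw [norm_sq_mul_norm_sq_eq_re_sq_add_im_sq, hAB]; ring
  rw [meanSqDeviation_wavePacket hħ hAB hc, meanSqDeviation_wavePacket hħ hAB hc,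
    norm_mul_add_I_mul_mul_sq, norm_mul_add_I_mul_mul_sq, ← hdet,
    ← rotated_diagonal_mul_rotated_diagonal]
  ring

theorem stmt_10_general (hħ : 0 < ħ) (hAB : conj A * B + conj B * A = 2) (hc : c ^ 2 = A⁻¹)
    (θ : ℝ) :
    meanSqDeviation ħ (Real.cos θ) (Real.sin θ) (a * Real.cos θ + η * Real.sin θ)
        (wavePacket ħ a η A B c) *
      meanSqDeviation ħ (-Real.sin θ) (Real.cos θ) (a * -Real.sin θ + η * Real.cos θ)
        (wavePacket ħ a η A B c) = ħ ^ 2 / 4 ↔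
    (‖B‖ ^ 2 - ‖A‖ ^ 2) * Real.sin (2 * θ) = 2 * (B * conj A).im * Real.cos (2 * θ) := by
  rw [meanSqDeviation_mul_meanSqDeviation_rotated_wavePacket hħ (mul_conj_re_eq_one_iff.2 hAB) hc,
    mul_eq_left₀ (by positivity), add_eq_left, sq_eq_zero_iff, div_eq_zero_iff, sub_eq_zero]
  simp

end

/-- Main theorem: with `θ = ½·arctan(2·Im(B conj A)/(|B|² − |A|²))`, the
semiclassical wave packet `φ₀` minimizes the uncertainty product for the
rotated observables `α = cos θ · x + sin θ · p` and `β = −sin θ · x + cos θ · p`: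
`(Δα)²·(Δβ)² = ħ²/4`, i.e. `Δα·Δβ = ħ/2`. -/
theorem stmt_10 (hbar a η : ℝ) (hhbar : 0 < hbar) (A B c : ℂ)
    (hAB : (starRingEnd ℂ) A * B + (starRingEnd ℂ) B * A = 2)
    (hc : c ^ 2 = A⁻¹) (hABne : ‖A‖ ≠ ‖B‖) (φ : ℝ → ℂ)
    (hφ : ∀ x : ℝ, φ x =
      (Real.pi ^ (-(1/4 : ℝ)) : ℝ) * (hbar ^ (-(1/4 : ℝ)) : ℝ) * c *
        Complex.exp (-B * ((x : ℂ) - a) ^ 2 / (2 * A * hbar) +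
          Complex.I * η * ((x : ℂ) - a) / hbar)) :
    let θ : ℝ := 1 / 2 *
      Real.arctan (2 * (B * (starRingEnd ℂ) A).im / (‖B‖ ^ 2 - ‖A‖ ^ 2))
    let Eα : ℝ := a * Real.cos θ + η * Real.sin θ
    let Eβ : ℝ := -a * Real.sin θ + η * Real.cos θ
    (∫ x : ℝ, ‖(Real.cos θ : ℂ) * x * φ x - Complex.I * hbar * Real.sin θ * deriv φ x
        - Eα * φ x‖ ^ 2) *
      (∫ x : ℝ, ‖-(Real.sin θ : ℂ) * x * φ x - Complex.I * hbar * Real.cos θ * deriv φ x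
        - Eβ * φ x‖ ^ 2) = hbar ^ 2 / 4 := by
  intro θ Eα Eβ
  obtain rfl : φ = wavePacket hbar a η A B c := funext hφ
  have hnorm_sq : ‖B‖ ^ 2 - ‖A‖ ^ 2 ≠ 0 := by
    rw [sub_ne_zero, Ne, sq_eq_sq₀ (norm_nonneg _) (norm_nonneg _)]
    exact hABne.symm
  have hθ : 2 * θ = Real.arctan (2 * (B * (starRingEnd ℂ) A).im / (‖B‖ ^ 2 - ‖A‖ ^ 2)) := by
    simp only [θ]; ring
  simpa [meanSqDeviation, Eα, Eβ] using
    (stmt_10_general hhbar hAB hc θ).2 (hθ ▸ mul_sin_arctan_div hnorm_sq _)
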